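/- Let Dtilde be a symmetric cycle in the hypercube graph Htilde(t,2) on the vertex set {0,1}^t, i.e. a 2t-cycle whose vertex sequence (Dtilde^0,...,Dtilde^{2t-1}) satisfies Dtilde^{k+t} = (1,...,1) - Dtilde^k for 0 <= k <= t-1. Then for every vertex Ttilde in {0,1}^t there exists a unique inclusion-minimal subset Qtilde of the vertex sequence of Dtilde, of odd cardinality, such that Ttilde = -(1/2)(|Qtilde| - 1)*(1,...,1) + sum of all members Q of Qtilde with Q not equal to the zero vector. -/

import Mathlib

open Finset

noncomputable section

/-- Row vectors of `ℝ^t`. -/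
abbrev Vec (t : ℕ) := Fin t → ℝ

/-- `T` is a vertex of the discrete hypercube `{1,-1}^t`. -/
def IsPMVertex {t : ℕ} (T : Vec t) : Prop := ∀ i, T i = 1 ∨ T i = -1

/-- `T` is a vertex of the discrete hypercube `{0,1}^t`. -/
def Is01Vertex {t : ℕ} (T : Vec t) : Prop := ∀ i, T i = 0 ∨ T i = 1

open Classical in
/-- Hamming distance between two vectors. -/
def hamming {t : ℕ} (X Y : Vec t) : ℕ :=
  (Finset.univ.filter fun i => X i ≠ Y i).card

/-- The standard scalar product on `ℝ^t`. -/
def sprod {t : ℕ} (X Y : Vec t) : ℝ := ∑ i, X i * Y i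

open Classical in
/-- The cardinality of the negative part `T⁻ = {e : T e = -1}` of `T`. -/
def negCard {t : ℕ} (T : Vec t) : ℕ :=
  (Finset.univ.filter fun i => T i = -1).card

open Classical in
/-- The Hamming weight (number of coordinates equal to `1`) of a `0/1`-vector. -/
def hwt01 {t : ℕ} (T : Vec t) : ℕ :=
  (Finset.univ.filter fun i => T i = 1).card

/-- `D` (read as a `2t`-periodic sequence `D^0, D^1, …`) is a symmetric cycle in the
hypercube graph `H(t,2)` on the vertex set `{1,-1}^t`: all `D^k` are vertices,
consecutive members are adjacent (Hamming distance `1`), the `2t` members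
`D^0, …, D^{2t-1}` are pairwise distinct, and `D^{k+t} = -D^k` for `0 ≤ k ≤ t-1`. -/
structure IsSymCycle (t : ℕ) (D : ℕ → Vec t) : Prop where
  vertex : ∀ k, IsPMVertex (D k)
  periodic : ∀ k, D (k + 2 * t) = D k
  adj : ∀ k, hamming (D k) (D (k + 1)) = 1
  inj : ∀ k l, k < 2 * t → l < 2 * t → D k = D l → k = l
  symm : ∀ k, k ≤ t - 1 → D (k + t) = -(D k)

/-- `D` is a symmetric cycle in the hypercube graph on the vertex set `{0,1}^t`:
here `D^{k+t} = (1,…,1) - D^k` for `0 ≤ k ≤ t-1`. -/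
structure IsSymCycle01 (t : ℕ) (D : ℕ → Vec t) : Prop where
  vertex : ∀ k, Is01Vertex (D k)
  periodic : ∀ k, D (k + 2 * t) = D k
  adj : ∀ k, hamming (D k) (D (k + 1)) = 1
  inj : ∀ k l, k < 2 * t → l < 2 * t → D k = D l → k = l
  symm : ∀ k, k ≤ t - 1 → D (k + t) = (fun _ => 1) - D k

open Classical in
/-- The vertex sequence `V(D) = (D^0, …, D^{2t-1})` of a cycle, as a finset. -/
def VD (t : ℕ) (D : ℕ → Vec t) : Finset (Vec t) :=
  (Finset.range (2 * t)).image D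

/-- `Q` is an inclusion-minimal subset of `V(D)` whose members sum to `T` (in `ℝ^t`). -/
def IsMinDecomp (t : ℕ) (D : ℕ → Vec t) (T : Vec t) (Q : Finset (Vec t)) : Prop :=
  Q ⊆ VD t D ∧ (∑ q ∈ Q, q) = T ∧
    ∀ Q' : Finset (Vec t), Q' ⊆ VD t D → (∑ q ∈ Q', q) = T → ¬Q' ⊂ Q

/-- The vertex `T_S ∈ {1,-1}^t` whose negative part is `S`. -/
def topeOf (t : ℕ) (S : Finset (Fin t)) : Vec t := fun i => if i ∈ S then -1 else 1

/-- `x` is a coordinate vector of `T` w.r.t. `(D^0, …, D^{t-1})` with all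
components in `{-1,0,1}`; by uniqueness this is the vector `x(T,D)`. -/
def IsXVec (t : ℕ) (D : ℕ → Vec t) (T : Vec t) (x : Fin t → ℝ) : Prop :=
  (∀ i, x i = -1 ∨ x i = 0 ∨ x i = 1) ∧ T = ∑ i : Fin t, x i • D (i : ℕ)

open Classical in
/-- The `{0,1}`-decomposition equation
`T = -(|Q|-1)/2 • (1,…,1) + ∑_{q ∈ Q, q ≠ 0} q`. -/
def Decomp01 (t : ℕ) (T : Vec t) (Q : Finset (Vec t)) : Prop :=
  T = (-(((Q.card : ℝ) - 1) / 2)) • (fun _ => 1 : Vec t) +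
    ∑ q ∈ Q.filter (fun q => q ≠ (0 : Vec t)), q

/-- `R^k` for `0 ≤ k ≤ t-1`: the all-ones vector with the first `k` coordinates negated. -/
def Rvec (t : ℕ) (k : ℕ) : Vec t := fun i => if (i : ℕ) < k then -1 else 1

/-- The distinguished symmetric cycle `R` in `H(t,2)`:
`R^0 = (1,…,1)`, `R^s = {}_{-[s]}R^0` for `1 ≤ s ≤ t-1`, and `R^{k+t} = -R^k`. -/
def Rcyc (t : ℕ) (k : ℕ) : Vec t :=
  if k % (2 * t) < t then Rvec t (k % (2 * t)) else -(Rvec t (k % (2 * t) - t))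

/-- `q(A) = ℓ`: an (automatically, the unique) inclusion-minimal subset of `V(R)`
summing to `T_A` has cardinality `ℓ`. -/
def qIs (t : ℕ) (A : Finset (Fin t)) (ℓ : ℕ) : Prop :=
  ∃ Q : Finset (Vec t), IsMinDecomp t (Rcyc t) (topeOf t A) Q ∧ Q.card = ℓ

/-- `c(m;n) = binom(n-1, m-1)`, the number of compositions of `n` into `m` positive
parts (zero whenever `m = 0` or `n ≤ 0`). -/
def comp (m : ℕ) (n : ℤ) : ℕ :=
  if 1 ≤ m ∧ 1 ≤ n then ((n - 1).toNat).choose (m - 1) else 0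

/-- The number of ternary Smirnov words (words with no two equal adjacent letters)
over the alphabet `(θ, α, β) = (0, 1, 2)` with Parikh vector `(k, i, j)`
(that is, `k` letters `θ`, `i` letters `α`, `j` letters `β`), starting with the
letter `s'` and ending with the letter `s''`. -/
def Tm (s' s'' : Fin 3) (k i j : ℕ) : ℕ :=
  Set.ncard { w : List (Fin 3) | List.Chain' (· ≠ ·) w ∧
    w.count 0 = k ∧ w.count 1 = i ∧ w.count 2 = j ∧
    w.head? = some s' ∧ w.getLast? = some s'' }

/-- The number of Smirnov words over the alphabet `(θ, α, β, γ) = (0, 1, 2, 3)` with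
Parikh vector `(k, i, j, h)`, starting with `s'` and ending with `s''`. -/
def Fr (s' s'' : Fin 4) (k i j h : ℕ) : ℕ :=
  Set.ncard { w : List (Fin 4) | List.Chain' (· ≠ ·) w ∧
    w.count 0 = k ∧ w.count 1 = i ∧ w.count 2 = j ∧ w.count 3 = h ∧
    w.head? = some s' ∧ w.getLast? = some s'' }

/-!
Pass to `±1`-vectors by `v ↦ 2v - 1`; the equation then says that the members of `Q` sum to `T`.
Any `t` consecutive steps of a symmetric cycle flip each coordinate exactly once. Hence, read in
the coordinate flipped by the step `D^k → D^{k+1}`, an equation `∑ y_k D^k = T` becomes a statement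
about a sum of `t` consecutive `y`'s, and taking differences in `k` solves it: the coefficient of
`D^k` is half of the second difference at `k` of the Hamming distance to `T` along the cycle. It
lies in `{-1, 0, 1}`, so every `Q` that decomposes `T` must contain the members with coefficient
`1`, that is the strict local minima of the distance, and these alone already decompose `T`.
-/

theorem sum_range_add_add_apply {M : Type*} [AddCommMonoid M] (f : ℕ → M) (j n : ℕ) :
    ∑ k ∈ range n, f (j + k) + f (j + n) = ∑ k ∈ range n, f (j + 1 + k) + f j := by
  rw [← sum_range_succ (fun k => f (j + k)), sum_range_succ']
  simp only [add_assoc, add_comm 1, add_zero]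

theorem sum_range_add_eq_of_periodic {M : Type*} [AddCancelCommMonoid M] {f : ℕ → M} {n : ℕ}
    (hf : Function.Periodic f n) (j : ℕ) :
    ∑ k ∈ range n, f (j + k) = ∑ k ∈ range n, f k := by
  induction j with
  | zero => simp only [zero_add]
  | succ j ih =>
    have hshift := sum_range_add_add_apply f j n
    rw [hf j, add_left_inj, ih] at hshift
    exact hshift.symm

theorem sum_range_add_eq_neg_iff_of_antiperiodic {K : Type*} [Field K] [NeZero (2 : K)]
    {y g : ℕ → K} {n : ℕ} (hy : Function.Antiperiodic y n) (hg : Function.Antiperiodic g n) :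
    (∀ j, ∑ k ∈ range n, y (j + k) = -g j) ↔ ∀ j, y j = (g (j + 1) - g j) / 2 := by
  constructor
  · intro h j
    have hshift := sum_range_add_add_apply y j n
    rw [h j, h (j + 1), hy j] at hshift
    rw [eq_div_iff two_ne_zero]
    linear_combination -hshift
  · intro h j
    have htelescope := sum_range_sub (fun k => g (j + k)) n
    rw [hg j, add_zero] at htelescope
    simp only [h, ← sum_div, add_assoc, htelescope]
    rw [div_eq_iff two_ne_zero]
    ring

theorem sum_eq_card_sub_two_mul_card_filter {ι : Type*} {s : Finset ι} {f : ι → ℝ}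
    (hf : ∀ i ∈ s, f i = 1 ∨ f i = -1) :
    ∑ i ∈ s, f i = #s - 2 * #{i ∈ s | f i = -1} := by
  have hterm : ∀ i ∈ s, f i = 1 - 2 * if f i = -1 then 1 else 0 := by
    intro i hi
    rcases hf i hi with h | h <;> norm_num [h]
  rw [sum_congr rfl hterm, sum_sub_distrib, ← mul_sum, sum_boole, sum_const, nsmul_one]

theorem odd_card_of_sum_eq_one_or_neg_one {ι : Type*} {s : Finset ι} {f : ι → ℝ}
    (hf : ∀ i ∈ s, f i = 1 ∨ f i = -1) (hsum : ∑ i ∈ s, f i = 1 ∨ ∑ i ∈ s, f i = -1) :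
    Odd #s := by
  rw [sum_eq_card_sub_two_mul_card_filter hf] at hsum
  have hcard : (#s : ℤ) - 2 * #{i ∈ s | f i = -1} = 1 ∨
      (#s : ℤ) - 2 * #{i ∈ s | f i = -1} = -1 := by
    exact_mod_cast hsum
  rw [Nat.odd_iff]
  omega

section SignVectors

variable {t : ℕ} {X Y : Vec t}

theorem IsPMVertex.mul_self (hX : IsPMVertex X) (i : Fin t) : X i * X i = 1 :=
  mul_self_eq_one_iff.mpr (hX i)

theorem IsPMVertex.exists_eq_update_neg (hX : IsPMVertex X) (hY : IsPMVertex Y)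
    (h : hamming X Y = 1) : ∃ i, Y = Function.update X i (-X i) := by
  obtain ⟨i, hi⟩ := card_eq_one.mp h
  have hne : ∀ i', X i' ≠ Y i' ↔ i' = i := by
    simpa only [Finset.ext_iff, mem_filter, mem_univ, true_and, mem_singleton] using hi
  refine ⟨i, Function.eq_update_iff.mpr ⟨?_, fun i' hi' => ?_⟩⟩
  · have hXY := (hne i).mpr rfl
    rcases hX i with hx | hx <;> rcases hY i with hy | hy <;> simp_all
  · exact (not_not.mp (mt (hne i').mp hi')).symm

open Classical in
/-- How often `v` occurs in `Q`, an occurrence of `-v` counting as `-1`: the coefficient of `v` in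
the sum of `Q` once antipodal members are collected. -/
def netMultiplicity (Q : Finset (Vec t)) (v : Vec t) : ℝ :=
  (if v ∈ Q then 1 else 0) - (if -v ∈ Q then 1 else 0)

theorem netMultiplicity_neg (Q : Finset (Vec t)) (v : Vec t) :
    netMultiplicity Q (-v) = -netMultiplicity Q v := by
  rw [netMultiplicity, netMultiplicity, neg_neg, neg_sub]

theorem mem_of_netMultiplicity_eq_one {Q : Finset (Vec t)} {v : Vec t}
    (h : netMultiplicity Q v = 1) : v ∈ Q := by
  by_contra hv
  rw [netMultiplicity, if_neg hv] at h
  split_ifs at h <;> norm_num at h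

end SignVectors

namespace IsSymCycle

variable {t : ℕ} {D : ℕ → Vec t} {T : Vec t}

theorem exists_succ_eq_update_neg (hD : IsSymCycle t D) (k : ℕ) :
    ∃ i, D (k + 1) = Function.update (D k) i (-D k i) :=
  (hD.vertex k).exists_eq_update_neg (hD.vertex (k + 1)) (hD.adj k)

/-- The coordinate in which `D^k` and `D^{k+1}` differ. -/
def flip (hD : IsSymCycle t D) (k : ℕ) : Fin t :=
  (hD.exists_succ_eq_update_neg k).choose

theorem succ_apply_flip (hD : IsSymCycle t D) (k : ℕ) :
    D (k + 1) (hD.flip k) = -D k (hD.flip k) :=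
  (Function.eq_update_iff.mp (hD.exists_succ_eq_update_neg k).choose_spec).1

theorem succ_apply_of_ne_flip (hD : IsSymCycle t D) {k : ℕ} {i : Fin t} (h : i ≠ hD.flip k) :
    D (k + 1) i = D k i :=
  (Function.eq_update_iff.mp (hD.exists_succ_eq_update_neg k).choose_spec).2 i h

theorem apply_ne_neg (hD : IsSymCycle t D) (k : ℕ) (i : Fin t) : D k i ≠ -D k i := by
  rcases hD.vertex k i with h | h <;> norm_num [h]

theorem dim_pos (hD : IsSymCycle t D) : 0 < t :=
  Fin.pos (hD.flip 0)

theorem antiperiodic (hD : IsSymCycle t D) : Function.Antiperiodic D t := by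
  intro k
  induction k using Nat.strong_induction_on with
  | _ k ih =>
    have ht := hD.dim_pos
    rcases lt_or_ge k t with hk | hk
    · exact hD.symm k (by lia)
    · obtain ⟨l, rfl⟩ := Nat.exists_eq_add_of_le' hk
      rw [ih l (by lia), neg_neg, add_assoc, ← two_mul, hD.periodic]

theorem modEq_of_eq (hD : IsSymCycle t D) {k l : ℕ} (h : D k = D l) : k ≡ l [MOD 2 * t] := by
  have hpos : 0 < 2 * t := Nat.mul_pos two_pos hD.dim_pos
  have hper : Function.Periodic D (2 * t) := hD.periodic
  refine hD.inj _ _ (Nat.mod_lt k hpos) (Nat.mod_lt l hpos) ?_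
  rw [hper.map_mod_nat, hper.map_mod_nat, h]

theorem mem_VD (hD : IsSymCycle t D) (k : ℕ) : D k ∈ VD t D := by
  have hper : Function.Periodic D (2 * t) := hD.periodic
  refine mem_image.mpr ⟨k % (2 * t), mem_range.mpr ?_, hper.map_mod_nat k⟩
  exact Nat.mod_lt k (Nat.mul_pos two_pos hD.dim_pos)

theorem add_apply_of_forall_flip_ne (hD : IsSymCycle t D) {k n : ℕ} {i : Fin t}
    (h : ∀ m < n, hD.flip (k + m) ≠ i) : D (k + n) i = D k i := by
  induction n with
  | zero => rfl
  | succ n ih =>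
    rw [← add_assoc, hD.succ_apply_of_ne_flip (h n n.lt_succ_self).symm,
      ih fun m hm => h m (hm.trans n.lt_succ_self)]

-- `D^{k+t} = -D^k`, so `t` consecutive steps cannot avoid a coordinate; there are `t` of them.
theorem flip_add_bijective (hD : IsSymCycle t D) (k : ℕ) :
    Function.Bijective fun m : Fin t => hD.flip (k + m) := by
  refine Finite.surjective_iff_bijective.mp fun i => ?_
  by_contra! h
  have hfix : D (k + t) i = D k i := hD.add_apply_of_forall_flip_ne fun m hm => h ⟨m, hm⟩
  rw [hD.antiperiodic k] at hfix
  exact hD.apply_ne_neg k i hfix.symm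

theorem flip_surjective (hD : IsSymCycle t D) : Function.Surjective hD.flip := fun i =>
  let ⟨m, hm⟩ := (hD.flip_add_bijective 0).surjective i
  ⟨0 + m, hm⟩

theorem flip_add_ne_flip (hD : IsSymCycle t D) {k m : ℕ} (hm : 0 < m) (hmt : m < t) :
    hD.flip (k + m) ≠ hD.flip k := by
  intro h
  have heq := (hD.flip_add_bijective k).injective (a₁ := ⟨m, hmt⟩) (a₂ := ⟨0, hD.dim_pos⟩) h
  exact hm.ne' (Fin.mk.inj heq)

theorem flip_periodic (hD : IsSymCycle t D) : Function.Periodic hD.flip t := by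
  intro k
  by_contra hne
  have hstep := hD.succ_apply_of_ne_flip (Ne.symm hne)
  rw [add_right_comm, hD.antiperiodic, hD.antiperiodic, Pi.neg_apply, Pi.neg_apply,
    hD.succ_apply_flip, neg_neg] at hstep
  exact hD.apply_ne_neg k _ hstep

theorem add_apply_flip (hD : IsSymCycle t D) {j m : ℕ} (hm : m < t) :
    D (j + 1 + m) (hD.flip j) = -D j (hD.flip j) := by
  rw [hD.add_apply_of_forall_flip_ne, hD.succ_apply_flip]
  intro l hl
  rw [add_assoc]
  exact hD.flip_add_ne_flip (by lia) (by lia)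

/-- `T` and `D^k` compared in the coordinate flipped next. For a vertex `T` of `{1,-1}^t` it is
`1` or `-1` according as the step `D^k → D^{k+1}` leads away from `T` or towards `T`. -/
def agreement (hD : IsSymCycle t D) (T : Vec t) (k : ℕ) : ℝ :=
  T (hD.flip k) * D k (hD.flip k)

theorem agreement_antiperiodic (hD : IsSymCycle t D) (T : Vec t) :
    Function.Antiperiodic (hD.agreement T) t := by
  intro k
  rw [agreement, agreement, hD.flip_periodic, hD.antiperiodic, Pi.neg_apply, mul_neg]

theorem agreement_eq_one_or_neg_one (hD : IsSymCycle t D) (hT : IsPMVertex T) (k : ℕ) :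
    hD.agreement T k = 1 ∨ hD.agreement T k = -1 := by
  rw [agreement]
  rcases hT (hD.flip k) with h | h <;> rcases hD.vertex k (hD.flip k) with h' | h' <;>
    norm_num [h, h']

/-- The coefficient of `D^{k+1}` (note the shift) in the expansion of `T` along the cycle. For a
vertex `T` of `{1,-1}^t` it is `1` if the Hamming distance to `T` has a strict local minimum at
`D^{k+1}`, `-1` at a strict local maximum, and `0` otherwise. -/
def coeff (hD : IsSymCycle t D) (T : Vec t) (k : ℕ) : ℝ :=
  (hD.agreement T (k + 1) - hD.agreement T k) / 2

theorem coeff_antiperiodic (hD : IsSymCycle t D) (T : Vec t) :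
    Function.Antiperiodic (hD.coeff T) t := by
  intro k
  rw [coeff, coeff, add_right_comm, hD.agreement_antiperiodic, hD.agreement_antiperiodic]
  ring

theorem coeff_eq_neg_one_or_zero_or_one (hD : IsSymCycle t D) (hT : IsPMVertex T) (k : ℕ) :
    hD.coeff T k = -1 ∨ hD.coeff T k = 0 ∨ hD.coeff T k = 1 := by
  rw [coeff]
  rcases hD.agreement_eq_one_or_neg_one hT k with h | h <;>
    rcases hD.agreement_eq_one_or_neg_one hT (k + 1) with h' | h' <;> norm_num [h, h']

theorem coeff_eq_of_succ_eq (hD : IsSymCycle t D) (T : Vec t) {k l : ℕ}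
    (h : D (k + 1) = D (l + 1)) : hD.coeff T k = hD.coeff T l := by
  have hper := (hD.coeff_antiperiodic T).periodic
  rw [smul_eq_mul] at hper
  have hmod : k ≡ l [MOD 2 * t] := (hD.modEq_of_eq h).add_right_cancel' 1
  rw [← hper.map_mod_nat k, hmod, hper.map_mod_nat]

theorem sum_mul_apply_flip (hD : IsSymCycle t D) {y : ℕ → ℝ} (hy : Function.Antiperiodic y t)
    (j : ℕ) :
    ∑ k ∈ range t, y k * D k (hD.flip j) =
      -(∑ k ∈ range t, y (j + 1 + k)) * D j (hD.flip j) := by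
  have hper : Function.Periodic (fun k => y k * D k (hD.flip j)) t := fun k => by
    simp only [hy k, hD.antiperiodic k, Pi.neg_apply, neg_mul_neg]
  rw [← sum_range_add_eq_of_periodic hper (j + 1), neg_mul_comm, sum_mul]
  exact sum_congr rfl fun m hm => by rw [hD.add_apply_flip (mem_range.mp hm)]

theorem sum_smul_eq_iff (hD : IsSymCycle t D) {y : ℕ → ℝ} (hy : Function.Antiperiodic y t) :
    ∑ k ∈ range t, y k • D k = T ↔ ∀ k, y (k + 1) = hD.coeff T k := by
  have hy' : Function.Antiperiodic (fun k => y (k + 1)) t := fun k => by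
    simp only [add_right_comm k t 1, hy (k + 1)]
  unfold coeff
  rw [← sum_range_add_eq_neg_iff_of_antiperiodic hy' (hD.agreement_antiperiodic T), funext_iff,
    hD.flip_surjective.forall]
  refine forall_congr' fun j => ?_
  have hsq := (hD.vertex j).mul_self (hD.flip j)
  simp only [Finset.sum_apply, Pi.smul_apply, smul_eq_mul, hD.sum_mul_apply_flip hy, agreement,
    add_right_comm j _ 1]
  constructor <;> intro h
  · linear_combination (-D j (hD.flip j)) * h - (∑ k ∈ range t, y (j + 1 + k)) * hsq
  · linear_combination (-D j (hD.flip j)) * h + T (hD.flip j) * hsq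

theorem sum_eq_sum_netMultiplicity_smul (hD : IsSymCycle t D) {Q : Finset (Vec t)}
    (hQ : Q ⊆ VD t D) :
    ∑ q ∈ Q, q = ∑ k ∈ range t, netMultiplicity Q (D k) • D k := by
  classical
  have hinj : Set.InjOn D (range (2 * t)) := fun k hk l hl =>
    hD.inj k l (mem_range.mp hk) (mem_range.mp hl)
  have hantipode : ∀ k, D (t + k) = -D k := fun k => by rw [add_comm, hD.antiperiodic]
  calc ∑ q ∈ Q, q = ∑ q ∈ VD t D, if q ∈ Q then q else 0 := by
        rw [sum_ite_mem, inter_eq_right.mpr hQ]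
    _ = ∑ k ∈ range (t + t), if D k ∈ Q then D k else 0 := by
        rw [← two_mul, ← sum_image (f := fun q => if q ∈ Q then q else 0) hinj, VD]
    _ = ∑ k ∈ range t, netMultiplicity Q (D k) • D k := by
        rw [sum_range_add, ← sum_add_distrib]
        refine sum_congr rfl fun k _ => ?_
        rw [hantipode, netMultiplicity]
        split_ifs <;> module

theorem sum_eq_iff_netMultiplicity_eq_coeff (hD : IsSymCycle t D) {Q : Finset (Vec t)}
    (hQ : Q ⊆ VD t D) :
    ∑ q ∈ Q, q = T ↔ ∀ k, netMultiplicity Q (D (k + 1)) = hD.coeff T k := by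
  have hanti : Function.Antiperiodic (fun k => netMultiplicity Q (D k)) t := fun k => by
    simp only [hD.antiperiodic k, netMultiplicity_neg]
  rw [hD.sum_eq_sum_netMultiplicity_smul hQ, hD.sum_smul_eq_iff hanti]

open Classical in
/-- The members of the cycle with coefficient `1`, that is the strict local minima along the cycle
of the Hamming distance to `T`. -/
def localMinima (hD : IsSymCycle t D) (T : Vec t) : Finset (Vec t) :=
  {q ∈ VD t D | ∃ k, D (k + 1) = q ∧ hD.coeff T k = 1}

theorem mem_localMinima_iff (hD : IsSymCycle t D) {q : Vec t} :
    q ∈ hD.localMinima T ↔ q ∈ VD t D ∧ ∃ k, D (k + 1) = q ∧ hD.coeff T k = 1 := by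
  classical
  exact mem_filter

theorem succ_mem_localMinima_iff (hD : IsSymCycle t D) {k : ℕ} :
    D (k + 1) ∈ hD.localMinima T ↔ hD.coeff T k = 1 := by
  rw [hD.mem_localMinima_iff]
  constructor
  · rintro ⟨-, l, hl, hcoeff⟩
    rwa [hD.coeff_eq_of_succ_eq T hl.symm]
  · exact fun h => ⟨hD.mem_VD _, k, rfl, h⟩

theorem neg_succ_mem_localMinima_iff (hD : IsSymCycle t D) {k : ℕ} :
    -D (k + 1) ∈ hD.localMinima T ↔ hD.coeff T k = -1 := by
  rw [← hD.antiperiodic, add_right_comm, hD.succ_mem_localMinima_iff, hD.coeff_antiperiodic,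
    neg_eq_iff_eq_neg]

theorem netMultiplicity_localMinima (hD : IsSymCycle t D) (hT : IsPMVertex T) (k : ℕ) :
    netMultiplicity (hD.localMinima T) (D (k + 1)) = hD.coeff T k := by
  simp only [netMultiplicity, hD.succ_mem_localMinima_iff, hD.neg_succ_mem_localMinima_iff]
  rcases hD.coeff_eq_neg_one_or_zero_or_one hT k with h | h | h <;> norm_num [h]

theorem isLeast_localMinima (hD : IsSymCycle t D) (hT : IsPMVertex T) :
    IsLeast {Q | Q ⊆ VD t D ∧ ∑ q ∈ Q, q = T} (hD.localMinima T) := by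
  have hsub : hD.localMinima T ⊆ VD t D := fun q hq => (hD.mem_localMinima_iff.mp hq).1
  refine ⟨⟨hsub, (hD.sum_eq_iff_netMultiplicity_eq_coeff hsub).mpr
    (hD.netMultiplicity_localMinima hT)⟩, ?_⟩
  rintro Q ⟨hQ, hsum⟩ q hq
  obtain ⟨-, k, rfl, hcoeff⟩ := hD.mem_localMinima_iff.mp hq
  refine mem_of_netMultiplicity_eq_one ?_
  rw [(hD.sum_eq_iff_netMultiplicity_eq_coeff hQ).mp hsum, hcoeff]

theorem odd_card_of_sum_eq (hD : IsSymCycle t D) (hT : IsPMVertex T) {Q : Finset (Vec t)}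
    (hQ : Q ⊆ VD t D) (hsum : ∑ q ∈ Q, q = T) : Odd #Q := by
  let i : Fin t := ⟨0, hD.dim_pos⟩
  refine odd_card_of_sum_eq_one_or_neg_one (f := fun q => q i) (fun q hq => ?_) ?_
  · obtain ⟨k, -, rfl⟩ := mem_image.mp (hQ hq)
    exact hD.vertex k i
  · rw [← Finset.sum_apply, hsum]
    exact hT i

end IsSymCycle

section ZeroOne

variable {t : ℕ} {D : ℕ → Vec t} {T : Vec t}

/-- The bijection `v ↦ 2v - (1,…,1)` from `{0,1}^t` to `{1,-1}^t`, extended to `ℝ^t`. -/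
def toPM (v : Vec t) : Vec t := fun i => 2 * v i - 1

theorem toPM_injective : Function.Injective (toPM (t := t)) := fun _ _ h =>
  funext fun i => mul_left_cancel₀ two_ne_zero (sub_left_injective (congrFun h i))

theorem Is01Vertex.toPM (hT : Is01Vertex T) : IsPMVertex (toPM T) := fun i => by
  rcases hT i with h | h <;> norm_num [_root_.toPM, h]

theorem hamming_toPM (X Y : Vec t) : hamming (toPM X) (toPM Y) = hamming X Y := by
  simp only [hamming, toPM, ne_eq, sub_left_inj, mul_right_inj' (two_ne_zero' ℝ)]

theorem IsSymCycle01.toPM (hD : IsSymCycle01 t D) : IsSymCycle t fun k => toPM (D k) where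
  vertex k := (hD.vertex k).toPM
  periodic k := by rw [hD.periodic]
  adj k := by rw [hamming_toPM, hD.adj]
  inj k l hk hl h := hD.inj k l hk hl (toPM_injective h)
  symm k hk := by
    ext i
    simp only [hD.symm k hk, _root_.toPM, Pi.sub_apply, Pi.neg_apply]
    ring

open Classical in
theorem VD_toPM : VD t (fun k => toPM (D k)) = (VD t D).image toPM := by
  rw [VD, VD, image_image]
  rfl

open Classical in
theorem decomp01_iff_sum_image_toPM {Q : Finset (Vec t)} :
    Decomp01 t T Q ↔ ∑ q ∈ Q.image toPM, q = toPM T := by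
  rw [Decomp01, sum_filter_ne_zero, sum_image toPM_injective.injOn, funext_iff, funext_iff]
  refine forall_congr' fun i => ?_
  simp only [toPM, Pi.add_apply, Pi.smul_apply, Finset.sum_apply, smul_eq_mul, sum_sub_distrib,
    ← mul_sum, sum_const, nsmul_one]
  constructor <;> intro h <;> linarith

theorem stmt9_general (hD : IsSymCycle01 t D) (hT : Is01Vertex T) :
    ∃ Q, IsLeast {Q | Q ⊆ VD t D ∧ Decomp01 t T Q} Q ∧ Odd #Q := by
  classical
  obtain ⟨⟨hsub, hsum⟩, hleast⟩ := hD.toPM.isLeast_localMinima hT.toPM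
  have hodd := hD.toPM.odd_card_of_sum_eq hT.toPM hsub hsum
  obtain ⟨Q, hQ, himage⟩ := subset_image_iff.mp (hsub.trans_eq VD_toPM)
  rw [← himage] at hsum hleast hodd
  rw [card_image_of_injective _ toPM_injective] at hodd
  refine ⟨Q, ⟨⟨hQ, decomp01_iff_sum_image_toPM.mpr hsum⟩, ?_⟩, hodd⟩
  rintro Q' ⟨hQ', hdecomp⟩
  rw [← image_subset_image_iff toPM_injective]
  exact hleast ⟨VD_toPM ▸ image_subset_image hQ', decomp01_iff_sum_image_toPM.mp hdecomp⟩

end ZeroOne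

/-- for a symmetric cycle in the hypercube graph on `{0,1}^t`, every vertex
`T̃` admits a unique inclusion-minimal subset `Q̃ ⊆ V(D̃)`, of odd cardinality, with
`T̃ = -(|Q̃|-1)/2 ⬝ (1,…,1) + ∑_{Q ∈ Q̃, Q ≠ 0} Q`. -/
theorem stmt9 (t : ℕ) (ht : 3 ≤ t) (D : ℕ → Vec t) (hD : IsSymCycle01 t D)
    (T : Vec t) (hT : Is01Vertex T) :
    ∃ Q : Finset (Vec t),
      (Q ⊆ VD t D ∧ Decomp01 t T Q ∧
        ∀ Q' : Finset (Vec t), Q' ⊆ VD t D → Decomp01 t T Q' → ¬Q' ⊂ Q) ∧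
      Odd Q.card ∧
      ∀ Q' : Finset (Vec t),
        (Q' ⊆ VD t D ∧ Decomp01 t T Q' ∧
          ∀ Q'' : Finset (Vec t), Q'' ⊆ VD t D → Decomp01 t T Q'' → ¬Q'' ⊂ Q') →
        Q' = Q := by
  obtain ⟨Q, hQ, hodd⟩ := stmt9_general hD hT
  exact ⟨Q, ⟨hQ.1.1, hQ.1.2, fun Q' hsub hdecomp hlt => hlt.not_ge (hQ.2 ⟨hsub, hdecomp⟩)⟩, hodd,
    fun Q' ⟨hsub, hdecomp, hmin⟩ =>
      ((hQ.2 ⟨hsub, hdecomp⟩).eq_or_ssubset.resolve_right (hmin Q hQ.1.1 hQ.1.2)).symm⟩
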